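/- Let S be a factorizable inverse monoid with semilattice of idempotents E and group of units G, and let θ be the natural connection. Then: (i) for every idempotent e, the filter e↑ equals [e,1]·eθ = {e′g : e′ ∈ E, e ≤ e′, g ∈ eθ}; in particular e↑ is a factorizable inverse monoid with semilattice of idempotents [e,1] and group of units eθ; (ii) eS = [0,e]·G = {e′g : e′ ∈ E, e′ ≤ e, g ∈ G}; (iii) if f is an idempotent that is central in e↑, then F_{e,f} = f·e↑ = [e,f]·eθ = {e′g : e′ ∈ E, e ≤ e′ ≤ f, g ∈ eθ} and the group of units of F_{e,f} is UF_{e,f} = f·eθ = {fg : g ∈ eθ}. -/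

import Mathlib

/-- An inverse monoid: a monoid in which every element `a` has an inverse `a⁻¹`
satisfying `a * a⁻¹ * a = a` and `a⁻¹ * a * a⁻¹ = a⁻¹`, and this inverse is unique. -/
class InverseMonoid (S : Type*) extends Monoid S, Inv S where
  mul_inv_mul : ∀ a : S, a * a⁻¹ * a = a
  inv_mul_inv : ∀ a : S, a⁻¹ * a * a⁻¹ = a⁻¹
  inv_unique : ∀ a b : S, a * b * a = a → b * a * b = b → b = a⁻¹

/-- An inverse monoid with a (two-sided absorbing) zero element. -/
class InverseMonoidWithZero (S : Type*) extends InverseMonoid S, Zero S where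
  zero_mul : ∀ a : S, 0 * a = 0
  mul_zero : ∀ a : S, a * 0 = 0

/-- The natural partial order on an inverse monoid: `a ≤ b` iff `a = e * b`
for some idempotent `e`. -/
def NatLe {S : Type*} [Monoid S] (a b : S) : Prop :=
  ∃ e : S, IsIdempotentElem e ∧ a = e * b

/-- The filter `e↑ = {s | e ≤ s}` generated by `e`. -/
def upfilter {S : Type*} [Monoid S] (e : S) : Set S := {s | NatLe e s}

/-- `c` is central in (a subset) `T`: it belongs to `T` and commutes with all elements of `T`. -/
def CentralIn {S : Type*} [Mul S] (T : Set S) (c : S) : Prop :=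
  c ∈ T ∧ ∀ s ∈ T, c * s = s * c

/-- A monoid is factorizable if every element is a product of an idempotent and a unit. -/
def Factorizable (S : Type*) [Monoid S] : Prop :=
  ∀ s : S, ∃ e g : S, IsIdempotentElem e ∧ IsUnit g ∧ s = e * g

/-- The natural connection `θ`: for an (idempotent) `e`, the subgroup
`eθ = {g ∈ G : e * g = e}` of the group of units. -/
def natconn {S : Type*} [Monoid S] (e : S) : Subgroup Sˣ where
  carrier := {g : Sˣ | e * (g : S) = e}
  one_mem' := by simp
  mul_mem' := by
    intro a b ha hb
    simp only [Set.mem_setOf_eq, Units.val_mul] at *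
    rw [← mul_assoc, ha, hb]
  inv_mem' := by
    intro a ha
    simp only [Set.mem_setOf_eq] at *
    nth_rewrite 1 [← ha]
    rw [mul_assoc, ← Units.val_mul, mul_inv_cancel, Units.val_one, mul_one]

/-- The natural connection is a dual isomorphism from the idempotents onto a
sublattice of the lattice of subgroups of the group of units: it is injective on
idempotents, order-reversing in both directions, and its image is closed under
joins and meets of subgroups. -/
def NatconnDualIso (S : Type*) [Monoid S] : Prop :=
  (∀ e f : S, IsIdempotentElem e → IsIdempotentElem f → natconn e = natconn f → e = f) ∧
  (∀ e f : S, IsIdempotentElem e → IsIdempotentElem f →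
    (NatLe e f ↔ natconn f ≤ natconn e)) ∧
  (∀ e f : S, IsIdempotentElem e → IsIdempotentElem f →
    (∃ h : S, IsIdempotentElem h ∧ natconn h = natconn e ⊔ natconn f) ∧
    (∃ h : S, IsIdempotentElem h ∧ natconn h = natconn e ⊓ natconn f))

/-- `j` is the join (least upper bound) of `e` and `f` with respect to the natural order. -/
def IsNatJoin {S : Type*} [Monoid S] (e f j : S) : Prop :=
  NatLe e j ∧ NatLe f j ∧ ∀ x : S, NatLe e x → NatLe f x → NatLe j x

/-- `F_{e,f} = f · e↑`. -/
def Fef {S : Type*} [Monoid S] (e f : S) : Set S := (f * ·) '' upfilter e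

/-- `UF_{e,f}`: the group of units of the monoid `F_{e,f}` (whose identity is `f`). -/
def UFef {S : Type*} [Monoid S] (e f : S) : Set S :=
  {x ∈ Fef e f | ∃ y ∈ Fef e f, x * y = f ∧ y * x = f}

/-- The centre of a subset `T`. -/
def ZIn {S : Type*} [Mul S] (T : Set S) : Set S := {x ∈ T | ∀ y ∈ T, x * y = y * x}

/-- Two subsets are isomorphic as semigroups (with the induced multiplication). -/
def SubIso {S : Type*} [Mul S] (A B : Set S) : Prop :=
  ∃ φ : S → S, Set.BijOn φ A B ∧ ∀ a ∈ A, ∀ b ∈ A, φ (a * b) = φ a * φ b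

/-- A subcentral idempotent series between `0` and `a`. -/
def IsSubcentralSeriesBetween {S : Type*} [Monoid S] [Zero S] (n : ℕ) (c : ℕ → S) (a : S) :
    Prop :=
  c 0 = 0 ∧ c n = a ∧ (∀ i ≤ n, IsIdempotentElem (c i)) ∧
    ∀ i < n, CentralIn (upfilter (c i)) (c (i + 1))

/-- A subcentral idempotent series of `S` (between `0` and `1`). -/
def IsSubcentralSeries {S : Type*} [Monoid S] [Zero S] (n : ℕ) (c : ℕ → S) : Prop :=
  IsSubcentralSeriesBetween n c 1

/-- A central idempotent series of `S`. -/
def IsCentralSeries {S : Type*} [Monoid S] [Zero S] (n : ℕ) (c : ℕ → S) : Prop :=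
  c 0 = 0 ∧ c n = 1 ∧ (∀ i ≤ n, IsIdempotentElem (c i)) ∧
    (∀ i < n, NatLe (c i) (c (i + 1))) ∧
    ∀ i < n, CentralIn Set.univ (c (i + 1))

/-- A subcentral idempotent: one occurring in some subcentral idempotent series of `S`. -/
def IsSubcentralIdem {S : Type*} [Monoid S] [Zero S] (e : S) : Prop :=
  ∃ (n : ℕ) (c : ℕ → S), IsSubcentralSeries n c ∧ ∃ i ≤ n, c i = e

/-- A `G`-nilpotent series: a chain of central idempotents from `0` to `1` with
`F_{eᵢ,eᵢ₊₁} ⊆ Z(F_{0,eᵢ₊₁})`. -/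
def GNilpotentSeries {S : Type*} [Monoid S] [Zero S] (n : ℕ) (c : ℕ → S) : Prop :=
  c 0 = 0 ∧ c n = 1 ∧ (∀ i ≤ n, IsIdempotentElem (c i) ∧ CentralIn Set.univ (c i)) ∧
    (∀ i < n, NatLe (c i) (c (i + 1))) ∧
    ∀ i < n, Fef (c i) (c (i + 1)) ⊆ ZIn (Fef 0 (c (i + 1)))

/-- A `G`-solvable series: a chain of central idempotents from `0` to `1` with
each `F_{eᵢ,eᵢ₊₁}` commutative. -/
def GSolvableSeries {S : Type*} [Monoid S] [Zero S] (n : ℕ) (c : ℕ → S) : Prop :=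
  c 0 = 0 ∧ c n = 1 ∧ (∀ i ≤ n, IsIdempotentElem (c i) ∧ CentralIn Set.univ (c i)) ∧
    (∀ i < n, NatLe (c i) (c (i + 1))) ∧
    ∀ i < n, ∀ x ∈ Fef (c i) (c (i + 1)), ∀ y ∈ Fef (c i) (c (i + 1)), x * y = y * x

/-- `S` is `G`-nilpotent. -/
def GNilpotent (S : Type*) [Monoid S] [Zero S] : Prop :=
  ∃ (n : ℕ) (c : ℕ → S), GNilpotentSeries n c

/-- `S` is `G`-solvable. -/
def GSolvable (S : Type*) [Monoid S] [Zero S] : Prop :=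
  ∃ (n : ℕ) (c : ℕ → S), GSolvableSeries n c

/-- Two idempotent series are isomorphic: same length, and a one-to-one correspondence
between their factors under which corresponding factors are isomorphic. -/
def SeriesIso {S : Type*} [Monoid S] (n : ℕ) (c : ℕ → S) (n' : ℕ) (d : ℕ → S) : Prop :=
  n = n' ∧ ∃ σ : ℕ → ℕ, Set.BijOn σ {i | i < n} {i | i < n'} ∧
    ∀ i < n, SubIso (Fef (c i) (c (i + 1))) (Fef (d (σ i)) (d (σ i + 1)))

/-- A composition series (for a kind `P` of series): it has no repeated terms, and any
refinement of it (of the same kind) only repeats its terms. -/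
def IsCompositionOf {S : Type*} (P : ℕ → (ℕ → S) → Prop) (n : ℕ) (c : ℕ → S) : Prop :=
  P n c ∧ (∀ i ≤ n, ∀ j ≤ n, c i = c j → i = j) ∧
    ∀ (m : ℕ) (d : ℕ → S), P m d → (∀ i ≤ n, ∃ j ≤ m, d j = c i) →
      ∀ j ≤ m, ∃ i ≤ n, d j = c i

/-!
Idempotents of an inverse monoid commute, so for an idempotent `e` the relation `e ≤ s` just says
`e * s = e`. For an idempotent `h` this gives `e ≤ h * g` iff `e ≤ h` and `e * g = e`. When `g` is a
unit, it also gives `f * (h * g) = h * g` iff `h ≤ f`. Writing every element as `h * g`, one can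
therefore read off `e↑`, `eS` and `f · e↑ = {x ∈ e↑ | f * x = x}`. If `x = h * g` with `h ≤ f`
satisfies `x * y = f`, then `h` fixes `f`, which forces `h = f`.
-/

theorem exists_eq_mul_iff_mul_eq_self {S : Type*} [Semigroup S] {e x : S}
    (he : IsIdempotentElem e) : (∃ y, x = e * y) ↔ e * x = x := by
  constructor
  · rintro ⟨y, rfl⟩
    rw [← mul_assoc, he.eq]
  · exact fun h => ⟨x, h.symm⟩

section Monoid

variable {S : Type*} [Monoid S] {e f s : S}

theorem natLe_of_mul_eq_left (he : IsIdempotentElem e) (h : e * s = e) : NatLe e s :=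
  ⟨e, he, h.symm⟩

theorem mul_unit_mem_UFef (he : IsIdempotentElem e) (hf : IsIdempotentElem f)
    {u : Sˣ} (hu : u ∈ natconn e) (hcomm : Commute f (u : S)) :
    f * (u : S) ∈ UFef e f := by
  have mem_upfilter {v : Sˣ} (hv : v ∈ natconn e) : (v : S) ∈ upfilter e :=
    natLe_of_mul_eq_left he hv
  have mul_mul_inv {v : Sˣ} (hv : Commute f (v : S)) : f * (v : S) * (f * (v⁻¹ : Sˣ)) = f := by
    rw [hv.symm.mul_mul_mul_comm, hf.eq, Units.mul_inv, mul_one]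
  exact ⟨⟨u, mem_upfilter hu, rfl⟩, f * (u⁻¹ : Sˣ), ⟨_, mem_upfilter (inv_mem hu), rfl⟩,
    mul_mul_inv hcomm, by simpa only [inv_inv] using mul_mul_inv hcomm.units_inv_right⟩

end Monoid

namespace InverseMonoid

variable {S : Type*} [InverseMonoid S] {e f g h s x : S}

theorem eq_of_isInverse {a b c : S} (hab : a * b * a = a) (hba : b * a * b = b)
    (hac : a * c * a = a) (hca : c * a * c = c) : b = c :=
  (inv_unique a b hab hba).trans (inv_unique a c hac hca).symm

-- If `x` is inverse to `e * f`, then so is `f * x * e`. Hence `x = f * x * e`, which makes `x`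
-- idempotent and so inverse to itself as well as to `e * f`.
theorem isIdempotentElem_mul (he : IsIdempotentElem e) (hf : IsIdempotentElem f) :
    IsIdempotentElem (e * f) := by
  obtain ⟨x, mul_x_mul, x_mul_x⟩ :
      ∃ x, e * f * x * (e * f) = e * f ∧ x * (e * f) * x = x :=
    ⟨(e * f)⁻¹, mul_inv_mul _, inv_mul_inv _⟩
  have sandwich : f * x * e = x := by
    refine eq_of_isInverse (a := e * f) ?_ ?_ mul_x_mul x_mul_x
    · calc e * f * (f * x * e) * (e * f) = e * (f * f) * x * ((e * e) * f) := by
            simp only [mul_assoc]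
        _ = e * f := by rw [he.eq, hf.eq, mul_x_mul]
    · calc f * x * e * (e * f) * (f * x * e) = f * (x * ((e * e) * (f * f)) * x) * e := by
            simp only [mul_assoc]
        _ = f * x * e := by rw [he.eq, hf.eq, x_mul_x]
  have x_idem : IsIdempotentElem x := calc
    x * x = f * x * e * (f * x * e) := by rw [sandwich]
    _ = f * (x * (e * f) * x) * e := by simp only [mul_assoc]
    _ = x := by rw [x_mul_x, sandwich]
  have eq_x : e * f = x :=
    eq_of_isInverse x_mul_x mul_x_mul (by rw [x_idem.eq, x_idem.eq]) (by rw [x_idem.eq, x_idem.eq])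
  rwa [eq_x]

theorem commute_of_isIdempotentElem (he : IsIdempotentElem e) (hf : IsIdempotentElem f) :
    Commute e f := by
  have sandwich {a b : S} (ha : IsIdempotentElem a) (hb : IsIdempotentElem b) :
      a * b * (b * a) * (a * b) = a * b := calc
    a * b * (b * a) * (a * b) = a * (b * b) * ((a * a) * b) := by simp only [mul_assoc]
    _ = a * b := by rw [ha.eq, hb.eq, (isIdempotentElem_mul ha hb).eq]
  have ef_idem := isIdempotentElem_mul he hf
  exact eq_of_isInverse (by rw [ef_idem.eq, ef_idem.eq]) (by rw [ef_idem.eq, ef_idem.eq])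
    (sandwich he hf) (sandwich hf he)

theorem natLe_iff_mul_eq_left (he : IsIdempotentElem e) : NatLe e s ↔ e * s = e := by
  refine ⟨?_, natLe_of_mul_eq_left he⟩
  rintro ⟨h, hh, hs⟩
  have h_mul : h * e = e := by rw [hs, ← mul_assoc, hh.eq]
  calc e * s = h * e * s := by rw [h_mul]
    _ = e * (h * s) := by rw [← (commute_of_isIdempotentElem he hh).eq, mul_assoc]
    _ = e := by rw [← hs, he.eq]

theorem natLe_mul_iff (he : IsIdempotentElem e) (hh : IsIdempotentElem h) :
    NatLe e (h * g) ↔ NatLe e h ∧ e * g = e := by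
  simp only [natLe_iff_mul_eq_left he]
  constructor
  · intro heq
    have e_mul : e * h = e := calc
      e * h = h * (e * (h * g)) := by rw [heq, (commute_of_isIdempotentElem he hh).eq]
      _ = e * (h * h * g) := by
        rw [← mul_assoc, ← (commute_of_isIdempotentElem he hh).eq]
        simp only [mul_assoc]
      _ = e := by rw [hh.eq, heq]
    exact ⟨e_mul, by rwa [← mul_assoc, e_mul] at heq⟩
  · rintro ⟨e_mul, hg⟩
    rw [← mul_assoc, e_mul, hg]

theorem mul_mul_unit_eq_self_iff (hf : IsIdempotentElem f) (hh : IsIdempotentElem h)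
    (hg : IsUnit g) : f * (h * g) = h * g ↔ NatLe h f := by
  rw [← mul_assoc, hg.mul_left_inj, (commute_of_isIdempotentElem hf hh).eq,
    natLe_iff_mul_eq_left hh]

theorem mem_upfilter_iff (hfact : Factorizable S) (he : IsIdempotentElem e) :
    x ∈ upfilter e ↔ ∃ e' g : S, IsIdempotentElem e' ∧ NatLe e e' ∧
      IsUnit g ∧ e * g = e ∧ x = e' * g := by
  constructor
  · intro hx
    obtain ⟨e', g, he', hg, rfl⟩ := hfact x
    obtain ⟨hle, heg⟩ := (natLe_mul_iff he he').1 hx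
    exact ⟨e', g, he', hle, hg, heg, rfl⟩
  · rintro ⟨e', g, he', hle, -, heg, rfl⟩
    exact (natLe_mul_iff he he').2 ⟨hle, heg⟩

theorem mem_principalRightIdeal_iff (hfact : Factorizable S) (he : IsIdempotentElem e) :
    (∃ y, x = e * y) ↔ ∃ e' g : S, IsIdempotentElem e' ∧ NatLe e' e ∧ IsUnit g ∧ x = e' * g := by
  rw [exists_eq_mul_iff_mul_eq_self he]
  constructor
  · intro hx
    obtain ⟨e', g, he', hg, rfl⟩ := hfact x
    exact ⟨e', g, he', (mul_mul_unit_eq_self_iff he he' hg).1 hx, hg, rfl⟩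
  · rintro ⟨e', g, he', hle, hg, rfl⟩
    exact (mul_mul_unit_eq_self_iff he he' hg).2 hle

theorem mem_Fef_iff_mul_eq_self (he : IsIdempotentElem e) (hf : IsIdempotentElem f)
    (hef : NatLe e f) : x ∈ Fef e f ↔ x ∈ upfilter e ∧ f * x = x := by
  constructor
  · rintro ⟨s, hs, rfl⟩
    exact ⟨(natLe_mul_iff he hf).2 ⟨hef, (natLe_iff_mul_eq_left he).1 hs⟩,
      (exists_eq_mul_iff_mul_eq_self hf).1 ⟨s, rfl⟩⟩
  · rintro ⟨hx, hfx⟩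
    exact ⟨x, hx, hfx⟩

theorem mem_Fef_iff (hfact : Factorizable S) (he : IsIdempotentElem e) (hf : IsIdempotentElem f)
    (hef : NatLe e f) :
    x ∈ Fef e f ↔ ∃ e' g : S, IsIdempotentElem e' ∧ NatLe e e' ∧ NatLe e' f ∧
      IsUnit g ∧ e * g = e ∧ x = e' * g := by
  rw [mem_Fef_iff_mul_eq_self he hf hef, mem_upfilter_iff hfact he]
  constructor
  · rintro ⟨⟨e', g, he', hle, hg, heg, rfl⟩, hfx⟩
    exact ⟨e', g, he', hle, (mul_mul_unit_eq_self_iff hf he' hg).1 hfx, hg, heg, rfl⟩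
  · rintro ⟨e', g, he', hle, hlf, hg, heg, rfl⟩
    exact ⟨⟨e', g, he', hle, hg, heg, rfl⟩, (mul_mul_unit_eq_self_iff hf he' hg).2 hlf⟩

theorem mem_UFef_iff (hfact : Factorizable S) (he : IsIdempotentElem e) (hf : IsIdempotentElem f)
    (hcf : CentralIn (upfilter e) f) :
    x ∈ UFef e f ↔ ∃ g : S, IsUnit g ∧ e * g = e ∧ x = f * g := by
  constructor
  · rintro ⟨hx, y, -, hxy, -⟩
    obtain ⟨h, g, hh, -, hle, hg, heg, rfl⟩ := (mem_Fef_iff hfact he hf hcf.1).1 hx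
    have h_fixes_f : h * f = f := by rw [← hxy, mul_assoc h g y, ← mul_assoc h h, hh.eq]
    have h_eq_f : h = f := ((natLe_iff_mul_eq_left hh).1 hle).symm.trans h_fixes_f
    exact ⟨g, hg, heg, by rw [h_eq_f]⟩
  · rintro ⟨_, ⟨u, rfl⟩, hu, rfl⟩
    exact mul_unit_mem_UFef he hf hu (hcf.2 _ (natLe_of_mul_eq_left he hu))

end InverseMonoid

/-- In a factorizable inverse monoid `S` with idempotents `E` and
group of units `G`: (i) `e↑ = [e,1]·eθ`; (ii) `eS = [0,e]·G`;
(iii) if `f` is central in `e↑` then `F_{e,f} = f·e↑ = [e,f]·eθ` and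
`UF_{e,f} = f·eθ`. -/
theorem stmt_0 {S : Type*} [InverseMonoid S] (hfact : Factorizable S)
    (e f : S) (he : IsIdempotentElem e) (hf : IsIdempotentElem f)
    (hcf : CentralIn (upfilter e) f) :
    upfilter e = {x : S | ∃ e' g : S, IsIdempotentElem e' ∧ NatLe e e' ∧
        IsUnit g ∧ e * g = e ∧ x = e' * g} ∧
    {x : S | ∃ y : S, x = e * y} = {x : S | ∃ e' g : S, IsIdempotentElem e' ∧ NatLe e' e ∧
        IsUnit g ∧ x = e' * g} ∧
    Fef e f = {x : S | ∃ e' g : S, IsIdempotentElem e' ∧ NatLe e e' ∧ NatLe e' f ∧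
        IsUnit g ∧ e * g = e ∧ x = e' * g} ∧
    UFef e f = {x : S | ∃ g : S, IsUnit g ∧ e * g = e ∧ x = f * g} :=
  ⟨Set.ext fun _ => InverseMonoid.mem_upfilter_iff hfact he,
    Set.ext fun _ => InverseMonoid.mem_principalRightIdeal_iff hfact he,
    Set.ext fun _ => InverseMonoid.mem_Fef_iff hfact he hf hcf.1,
    Set.ext fun _ => InverseMonoid.mem_UFef_iff hfact he hf hcf⟩
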